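/- arXiv:2305.16892 — 2 statements merged into one kernel-verified Lean document; each statement's English description precedes it below -/
import Mathlib

section
/- Let n, t ∈ ℕ with t ≥ 1, let L ≥ 1, and let Σ be an n×n positive semidefinite real matrix with Σᵢᵢ ≤ 1 for all i ∈ [n]. Let φ > 0 satisfy φ² ≤ φ²(Σ, t), where φ²(Σ, t) is the t-restricted ℓ1-eigenvalue of Σ with parameter L. Then the standard basis {e₁,…,eₙ} is a (t, φ/√t)-dictionary for Σ; in particular 𝒩_{t, φ/√t}(Σ) ≤ n. -/
open Matrix MeasureTheory ProbabilityTheory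
open scoped BigOperators ENNReal

noncomputable section

/-- `v` has at most `t` nonzero coordinates. -/
def SparseVec {k : ℕ} (t : ℕ) (v : Fin k → ℝ) : Prop := {i | v i ≠ 0}.ncard ≤ t

/-- ⟨x,y⟩_Σ := xᵀ Σ y. -/
def innerSigma {k : ℕ} (A : Matrix (Fin k) (Fin k) ℝ) (x y : Fin k → ℝ) : ℝ := x ⬝ᵥ (A *ᵥ y)

/-- ‖x‖_Σ := √(xᵀ Σ x). -/
def normSigma {k : ℕ} (A : Matrix (Fin k) (Fin k) ℝ) (x : Fin k → ℝ) : ℝ :=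
  Real.sqrt (innerSigma A x x)

/-- Euclidean norm on ℝ^k. -/
def l2norm {k : ℕ} (v : Fin k → ℝ) : ℝ := Real.sqrt (∑ i, v i ^ 2)

/-- ℓ1 norm on ℝ^k. -/
def l1norm {k : ℕ} (v : Fin k → ℝ) : ℝ := ∑ i, |v i|

/-- `D` is a `(t,α)`-dictionary for `A`: every `t`-sparse `v` with ‖v‖_Σ > 0 correlates
with some element of `D` at level `α` under the Σ-inner product. -/
def IsDictionary {k : ℕ} (t : ℕ) (α : ℝ) (A : Matrix (Fin k) (Fin k) ℝ) {N : ℕ}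
    (D : Fin N → Fin k → ℝ) : Prop :=
  ∀ v : Fin k → ℝ, SparseVec t v → 0 < normSigma A v →
    ∃ i, 0 < normSigma A (D i) ∧ α * (normSigma A v * normSigma A (D i)) ≤ |innerSigma A v (D i)|

/-- 𝒩_{t,α}(Σ): the minimum size of a `(t,α)`-dictionary (as an element of ℕ ∪ {∞}). -/
def coveringNumber {k : ℕ} (t : ℕ) (α : ℝ) (A : Matrix (Fin k) (Fin k) ℝ) : ℝ≥0∞ :=
  sInf {c : ℝ≥0∞ | ∃ (N : ℕ) (D : Fin N → Fin k → ℝ), IsDictionary t α A D ∧ c = (N : ℝ≥0∞)}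

/-- restriction of `w` to coordinates in `S` (zero outside `S`). -/
def restrictTo {k : ℕ} (S : Finset (Fin k)) (w : Fin k → ℝ) : Fin k → ℝ :=
  fun i => if i ∈ S then w i else 0

/-- The S-restricted ℓ1-eigenvalue φ²(Σ,S) with cone parameter L. -/
def restrictedL1Eig {k : ℕ} (A : Matrix (Fin k) (Fin k) ℝ) (L : ℝ) (S : Finset (Fin k)) : ℝ :=
  sInf {r : ℝ | ∃ w : Fin k → ℝ, w ≠ 0 ∧
    l1norm (fun i => if i ∈ S then 0 else w i) ≤ L * l1norm (restrictTo S w) ∧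
    r = (S.card : ℝ) * innerSigma A w w / l1norm (restrictTo S w) ^ 2}

/-- The t-restricted ℓ1-eigenvalue φ²(Σ,t): minimum of φ²(Σ,S) over nonempty S, |S| ≤ t. -/
def restrictedL1EigT {k : ℕ} (A : Matrix (Fin k) (Fin k) ℝ) (L : ℝ) (t : ℕ) : ℝ :=
  sInf {r : ℝ | ∃ S : Finset (Fin k), S.Nonempty ∧ S.card ≤ t ∧ r = restrictedL1Eig A L S}

/-!
Hölder's inequality `‖v‖_Σ² = ⟨v, Σv⟩ ≤ ‖v‖₁ · maxᵢ |(Σv)ᵢ|` produces a coordinate `i` with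
`‖v‖_Σ² ≤ ‖v‖₁ · |⟨v, eᵢ⟩_Σ|`. Testing the restricted eigenvalue on a `t`-sparse `v` itself, which
lies in the cone of its own support, gives `φ ‖v‖₁ ≤ √t ‖v‖_Σ`, so that
`|⟨v, eᵢ⟩_Σ| ≥ (φ / √t) ‖v‖_Σ`, and `‖eᵢ‖_Σ = √Σᵢᵢ ≤ 1`.
-/

section

variable {k t : ℕ} {A : Matrix (Fin k) (Fin k) ℝ}

lemma l1norm_nonneg (v : Fin k → ℝ) : 0 ≤ l1norm v :=
  Finset.sum_nonneg fun _ _ => abs_nonneg _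

lemma l1norm_zero : l1norm (0 : Fin k → ℝ) = 0 := by
  simp [l1norm]

lemma exists_abs_dotProduct_le_l1norm_mul_abs [NeZero k] (x y : Fin k → ℝ) :
    ∃ i, |x ⬝ᵥ y| ≤ l1norm x * |y i| := by
  obtain ⟨i, hi⟩ := Finite.exists_max fun i => |y i|
  refine ⟨i, ?_⟩
  calc |x ⬝ᵥ y| ≤ ∑ j, |x j * y j| := Finset.abs_sum_le_sum_abs _ _
    _ = ∑ j, |x j| * |y j| := by simp only [abs_mul]
    _ ≤ ∑ j, |x j| * |y i| := by gcongr ∑ j, |x j| * ?_ with j; exact hi j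
    _ = l1norm x * |y i| := (Finset.sum_mul ..).symm

lemma innerSigma_self_nonneg (hA : A.PosSemidef) (x : Fin k → ℝ) : 0 ≤ innerSigma A x x :=
  hA.dotProduct_mulVec_nonneg x

lemma sq_normSigma (hA : A.PosSemidef) (x : Fin k → ℝ) :
    normSigma A x ^ 2 = innerSigma A x x :=
  Real.sq_sqrt (innerSigma_self_nonneg hA x)

lemma normSigma_zero : normSigma A 0 = 0 := by
  simp [normSigma, innerSigma]

lemma normSigma_pos_of_innerSigma_ne_zero (hA : A.PosSemidef) {x y : Fin k → ℝ}
    (h : innerSigma A x y ≠ 0) : 0 < normSigma A y := by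
  refine Real.sqrt_pos.mpr ((innerSigma_self_nonneg hA y).lt_of_ne' fun hy => h ?_)
  have hAy : A *ᵥ y = 0 := (hA.dotProduct_mulVec_zero_iff y).mp hy
  rw [innerSigma, hAy, dotProduct_zero]

lemma innerSigma_single_one_right (hA : A.IsSymm) (x : Fin k → ℝ) (i : Fin k) :
    innerSigma A x (Pi.single i 1) = (A *ᵥ x) i := by
  rw [innerSigma, dotProduct_mulVec, ← mulVec_transpose, hA.eq, dotProduct_single_one]

lemma normSigma_single_one (i : Fin k) : normSigma A (Pi.single i 1) = √(A i i) := by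
  simp [normSigma, innerSigma]

lemma exists_sq_normSigma_le_l1norm_mul_abs_innerSigma (hA : A.PosSemidef) {v : Fin k → ℝ}
    (hv : 0 < normSigma A v) :
    ∃ i, normSigma A v ^ 2 ≤ l1norm v * |innerSigma A v (Pi.single i 1)| := by
  have : NeZero k := by
    refine ⟨?_⟩
    rintro rfl
    rw [Subsingleton.elim v 0, normSigma_zero] at hv
    exact hv.false
  have hsymm : A.IsSymm := hA.isHermitian
  obtain ⟨i, hi⟩ := exists_abs_dotProduct_le_l1norm_mul_abs v (A *ᵥ v)
  refine ⟨i, ?_⟩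
  rw [sq_normSigma hA, innerSigma_single_one_right hsymm]
  exact (le_abs_self _).trans hi

lemma isDictionary_single_one {β : ℝ} (hA : A.PosSemidef) (hdiag : ∀ i, A i i ≤ 1)
    (hβ : 0 ≤ β) (hl1 : ∀ v, SparseVec t v → β * l1norm v ≤ normSigma A v) :
    IsDictionary t β A (fun i : Fin k => (Pi.single i 1 : Fin k → ℝ)) := by
  intro v hsparse hv
  obtain ⟨i, hi⟩ := exists_sq_normSigma_le_l1norm_mul_abs_innerSigma hA hv
  have hinner : innerSigma A v (Pi.single i 1) ≠ 0 := fun h => by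
    rw [h, abs_zero, mul_zero] at hi
    exact (pow_pos hv 2).not_ge hi
  have hcorr : β * normSigma A v ≤ |innerSigma A v (Pi.single i 1)| := by
    refine le_of_mul_le_mul_right ?_ hv
    calc β * normSigma A v * normSigma A v = β * normSigma A v ^ 2 := by ring
      _ ≤ β * (l1norm v * |innerSigma A v (Pi.single i 1)|) := by gcongr
      _ = β * l1norm v * |innerSigma A v (Pi.single i 1)| := by ring
      _ ≤ normSigma A v * |innerSigma A v (Pi.single i 1)| := by gcongr; exact hl1 v hsparse
      _ = |innerSigma A v (Pi.single i 1)| * normSigma A v := mul_comm _ _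
  have hle_one : normSigma A (Pi.single i 1) ≤ 1 := by
    rw [normSigma_single_one]
    exact Real.sqrt_le_one.mpr (hdiag i)
  refine ⟨i, normSigma_pos_of_innerSigma_ne_zero hA hinner, ?_⟩
  calc β * (normSigma A v * normSigma A (Pi.single i 1))
      ≤ β * (normSigma A v * 1) := by gcongr
    _ = β * normSigma A v := by rw [mul_one]
    _ ≤ |innerSigma A v (Pi.single i 1)| := hcorr

lemma IsDictionary.coveringNumber_le {α : ℝ} {N : ℕ} {D : Fin N → Fin k → ℝ}
    (hD : IsDictionary t α A D) : coveringNumber t α A ≤ N :=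
  sInf_le ⟨N, D, hD, rfl⟩

lemma restrictedL1Eig_quotient_nonneg (hA : A.PosSemidef) (S : Finset (Fin k))
    (w : Fin k → ℝ) :
    0 ≤ (S.card : ℝ) * innerSigma A w w / l1norm (restrictTo S w) ^ 2 := by
  have := innerSigma_self_nonneg hA w
  positivity

lemma restrictedL1Eig_nonneg (hA : A.PosSemidef) (L : ℝ) (S : Finset (Fin k)) :
    0 ≤ restrictedL1Eig A L S :=
  Real.sInf_nonneg fun _ ⟨w, _, _, hr⟩ => hr ▸ restrictedL1Eig_quotient_nonneg hA S w

lemma restrictedL1EigT_le (hA : A.PosSemidef) (L : ℝ) {S : Finset (Fin k)}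
    (hS : S.Nonempty) (hcard : S.card ≤ t) :
    restrictedL1EigT A L t ≤ restrictedL1Eig A L S :=
  csInf_le ⟨0, fun _ ⟨T, _, _, hr⟩ => hr ▸ restrictedL1Eig_nonneg hA L T⟩ ⟨S, hS, hcard, rfl⟩

lemma restrictedL1Eig_mul_sq_l1norm_restrictTo_le (hA : A.PosSemidef) {L : ℝ} {S : Finset (Fin k)}
    {w : Fin k → ℝ}
    (hcone : l1norm (fun i => if i ∈ S then 0 else w i) ≤ L * l1norm (restrictTo S w)) :
    restrictedL1Eig A L S * l1norm (restrictTo S w) ^ 2 ≤ S.card * innerSigma A w w := by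
  rcases (l1norm_nonneg (restrictTo S w)).eq_or_lt' with h0 | hpos
  · have := innerSigma_self_nonneg hA w
    rw [h0, zero_pow two_ne_zero, mul_zero]
    positivity
  · have hw : w ≠ 0 := by
      rintro rfl
      simp [restrictTo, l1norm] at hpos
    refine (le_div_iff₀ (pow_pos hpos 2)).mp (csInf_le ⟨0, ?_⟩ ⟨w, hw, hcone, rfl⟩)
    rintro _ ⟨u, -, -, rfl⟩
    exact restrictedL1Eig_quotient_nonneg hA S u

lemma restrictedL1Eig_mul_sq_l1norm_le_of_support (hA : A.PosSemidef) {L : ℝ} (hL : 0 ≤ L)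
    {S : Finset (Fin k)} {v : Fin k → ℝ} (hv : ∀ i ∉ S, v i = 0) :
    restrictedL1Eig A L S * l1norm v ^ 2 ≤ S.card * innerSigma A v v := by
  have hrestrict : restrictTo S v = v := by
    funext i
    simpa [restrictTo] using fun hi => (hv i hi).symm
  have hcompl : (fun i => if i ∈ S then 0 else v i) = 0 := by
    funext i
    simpa using hv i
  have hcone : l1norm (fun i => if i ∈ S then 0 else v i) ≤ L * l1norm (restrictTo S v) := by
    rw [hcompl, l1norm_zero]
    exact mul_nonneg hL (l1norm_nonneg _)
  simpa only [hrestrict] using restrictedL1Eig_mul_sq_l1norm_restrictTo_le hA hcone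

lemma SparseVec.exists_finset_mem_iff_ne_zero {v : Fin k → ℝ} (hv : SparseVec t v) :
    ∃ S : Finset (Fin k), S.card ≤ t ∧ ∀ i, i ∈ S ↔ v i ≠ 0 := by
  refine ⟨{i | v i ≠ 0}.toFinset, ?_, fun i => by simp⟩
  rw [← Set.ncard_eq_toFinset_card']
  exact hv

lemma SparseVec.restrictedL1EigT_mul_sq_l1norm_le (hA : A.PosSemidef) {L : ℝ} (hL : 0 ≤ L)
    {v : Fin k → ℝ} (hv : SparseVec t v) :
    restrictedL1EigT A L t * l1norm v ^ 2 ≤ t * normSigma A v ^ 2 := by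
  obtain rfl | hv0 := eq_or_ne v 0
  · simp [l1norm_zero, normSigma_zero]
  obtain ⟨S, hcard, hS⟩ := hv.exists_finset_mem_iff_ne_zero
  obtain ⟨j, hj⟩ := Function.ne_iff.mp hv0
  have hsupp : ∀ i ∉ S, v i = 0 := fun i hi => not_not.mp (mt (hS i).mpr hi)
  calc restrictedL1EigT A L t * l1norm v ^ 2
      ≤ restrictedL1Eig A L S * l1norm v ^ 2 := by
        gcongr
        exact restrictedL1EigT_le hA L ⟨j, (hS j).mpr hj⟩ hcard
    _ ≤ S.card * innerSigma A v v := restrictedL1Eig_mul_sq_l1norm_le_of_support hA hL hsupp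
    _ = S.card * normSigma A v ^ 2 := by rw [sq_normSigma hA]
    _ ≤ t * normSigma A v ^ 2 := by gcongr

lemma SparseVec.div_sqrt_mul_l1norm_le_normSigma (hA : A.PosSemidef) {L φ : ℝ} (hL : 0 ≤ L)
    (ht : 1 ≤ t) (hcompat : φ ^ 2 ≤ restrictedL1EigT A L t)
    {v : Fin k → ℝ} (hv : SparseVec t v) :
    φ / √t * l1norm v ≤ normSigma A v := by
  have ht0 : (0 : ℝ) < t := by exact_mod_cast ht
  refine le_of_sq_le_sq ?_ (Real.sqrt_nonneg _)
  calc (φ / √t * l1norm v) ^ 2 = φ ^ 2 * l1norm v ^ 2 / t := by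
        rw [mul_pow, div_pow, Real.sq_sqrt ht0.le, div_mul_eq_mul_div]
    _ ≤ restrictedL1EigT A L t * l1norm v ^ 2 / t := by gcongr
    _ ≤ normSigma A v ^ 2 :=
        (div_le_iff₀' ht0).mpr (hv.restrictedL1EigT_mul_sq_l1norm_le hA hL)

theorem stmt17_general (ht : 1 ≤ t) {L φ : ℝ} (hL : 0 ≤ L) (hA : A.PosSemidef)
    (hdiag : ∀ i, A i i ≤ 1) (hφ : 0 ≤ φ) (hcompat : φ ^ 2 ≤ restrictedL1EigT A L t) :
    IsDictionary t (φ / √t) A (fun i : Fin k => (Pi.single i 1 : Fin k → ℝ)) ∧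
      coveringNumber t (φ / √t) A ≤ (k : ℝ≥0∞) := by
  have hdict : IsDictionary t (φ / √t) A (fun i : Fin k => (Pi.single i 1 : Fin k → ℝ)) :=
    isDictionary_single_one hA hdiag (by positivity) fun _ hv =>
      hv.div_sqrt_mul_l1norm_le_normSigma hA hL ht hcompat
  exact ⟨hdict, hdict.coveringNumber_le⟩

end

/-- under the compatibility condition, the standard basis is a
(t, φ/√t)-dictionary for Σ; in particular 𝒩_{t,φ/√t}(Σ) ≤ n. -/
theorem stmt17 (n t : ℕ) (ht : 1 ≤ t) (L : ℝ) (hL : 1 ≤ L)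
    (A : Matrix (Fin n) (Fin n) ℝ) (hA : A.PosSemidef) (hdiag : ∀ i, A i i ≤ 1)
    (φ : ℝ) (hφ : 0 < φ) (hcompat : φ ^ 2 ≤ restrictedL1EigT A L t) :
    IsDictionary t (φ / Real.sqrt t) A (fun i : Fin n => (Pi.single i 1 : Fin n → ℝ)) ∧
      coveringNumber t (φ / Real.sqrt t) A ≤ (n : ℝ≥0∞) :=
  stmt17_general ht (zero_le_one.trans hL) hA hdiag hφ.le hcompat
end
end

section
/- There exists a universal constant C > 0 such that the following holds. Let n, m, t ∈ ℕ with n ≥ 2 and t ≥ 2, and let p₁,…,pₙ ∈ ℝᵐ be unit vectors (‖pᵢ‖₂ = 1 for all i). Then there exists a finite set 𝒟 ⊆ ℝⁿ with |𝒟| ≤ C·n^{t−1/2}, all of whose elements are t-sparse, such that for every t-sparse x ∈ ℝⁿ there exist coefficients (α_d)_{d∈𝒟} ∈ ℝ^𝒟 with x = Σ_{d∈𝒟} α_d·d and Σ_{d∈𝒟} |α_d|·‖Σᵢ₌₁ⁿ dᵢpᵢ‖₂ ≤ C·t^{3/2}·log(n)·‖Σᵢ₌₁ⁿ xᵢpᵢ‖₂.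 -/
open Matrix MeasureTheory ProbabilityTheory
open scoped BigOperators ENNReal

noncomputable section

/-!
Run over all sets `S` of `t - 2` coordinates, so that a `t`-sparse vector is supported on some `S`
and two further coordinates `i`, `j`. The part along `S` is routed by Gram–Schmidt at cost
`√#S`. Modulo the span of `S`, the coordinates `i` and `j` become multiples of residuals `u i` and
`u j` of norm `1` (or `0`), and a combination of `u i` and `u j` is routed through `u i` and
`u i - u j` or `u i + u j` at constant cost. Rather than storing all `n ^ 2` of these pairs, keep a
greedy 3-spanner of the weighted complete bipartite graph: it has no 4-cycle, hence only
`O(n ^ (3 / 2))` edges, and each missing pair is a telescoping sum of three lighter kept ones.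
-/

/-- The bipartite graph with sides `α` and `β` and edge set `E` contains no 4-cycle; equivalently,
the subset `E` of the grid `α × β` contains no four corners of a rectangle. This is what keeps a
greedy 3-spanner sparse. -/
def RectangleFree {α β : Type*} (E : Finset (α × β)) : Prop :=
  ∀ ⦃i i' j j'⦄, (i, j) ∈ E → (i, j') ∈ E → (i', j) ∈ E → (i', j') ∈ E → i = i' ∨ j = j'

namespace RectangleFree

variable {α β : Type*} {E : Finset (α × β)}

lemma insert [DecidableEq α] [DecidableEq β] (hE : RectangleFree E) {i : α} {j : β}
    (h : ∀ i' j', (i, j') ∈ E → (i', j') ∈ E → (i', j) ∉ E) :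
    RectangleFree (insert (i, j) E) := by
  intro a a' b b' h₁ h₂ h₃ h₄
  simp only [Finset.mem_insert, Prod.mk.injEq] at h₁ h₂ h₃ h₄
  -- Whichever corner `(i, j)` is, the other three form one of the excluded paths.
  have hold := @hE a a' b b'
  have hab := h a' b'
  have hab' := h a' b
  have ha'b := h a b'
  have ha'b' := h a b
  grind

variable [Fintype α] [Fintype β]

-- A pair of columns shared by two rows would be a rectangle, so each pair is counted at most once.
lemma sum_card_offDiag_row_le [DecidableEq α] [DecidableEq β] (hE : RectangleFree E) :
    ∑ i, (Finset.univ.filter fun j ↦ (i, j) ∈ E).offDiag.card ≤ Fintype.card β ^ 2 := by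
  have hdisj : ((Finset.univ : Finset α) : Set α).PairwiseDisjoint
      fun i ↦ (Finset.univ.filter fun j ↦ (i, j) ∈ E).offDiag := by
    refine fun i _ i' _ hne ↦ Finset.disjoint_left.2 fun ⟨j, j'⟩ hi hi' ↦ ?_
    simp only [Finset.mem_offDiag, Finset.mem_filter, Finset.mem_univ, true_and] at hi hi'
    exact (hE hi.1 hi.2.1 hi'.1 hi'.2.1).elim hne hi.2.2
  rw [← Finset.card_biUnion hdisj, sq, ← Fintype.card_prod]
  exact Finset.card_le_univ _

lemma card_sq_le (hE : RectangleFree E) :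
    (E.card : ℝ) ^ 2 ≤ Fintype.card α * (E.card + (Fintype.card β : ℝ) ^ 2) := by
  classical
  let d : α → ℕ := fun i ↦ (Finset.univ.filter fun j ↦ (i, j) ∈ E).card
  have hcard : E.card = ∑ i, d i := by
    simp only [d, Finset.card_filter]
    rw [← Fintype.sum_prod_type' fun i j ↦ if (i, j) ∈ E then 1 else 0]
    simp
  have hsq : ∑ i, d i ^ 2 ≤ E.card + Fintype.card β ^ 2 :=
    calc ∑ i, d i ^ 2 ≤ ∑ i, (d i + (Finset.univ.filter fun j ↦ (i, j) ∈ E).offDiag.card) := by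
          gcongr with i
          rw [Finset.offDiag_card, sq]
          exact le_add_tsub
      _ ≤ E.card + Fintype.card β ^ 2 := by
          rw [Finset.sum_add_distrib, hcard]
          gcongr
          exact hE.sum_card_offDiag_row_le
  calc (E.card : ℝ) ^ 2 = (∑ i, (d i : ℝ)) ^ 2 := by rw [hcard, Nat.cast_sum]
    _ ≤ Fintype.card α * ∑ i, (d i : ℝ) ^ 2 := by
        simpa using sq_sum_le_card_mul_sum_sq (s := Finset.univ) (f := fun i ↦ (d i : ℝ))
    _ ≤ Fintype.card α * (E.card + (Fintype.card β : ℝ) ^ 2) := by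
        gcongr
        exact_mod_cast hsq

theorem card_le (hE : RectangleFree E) :
    (E.card : ℝ) ≤ Fintype.card α + Fintype.card β * √(Fintype.card α) := by
  have hsq := hE.card_sq_le
  have hα : √(Fintype.card α : ℝ) ^ 2 = Fintype.card α := Real.sq_sqrt (Nat.cast_nonneg _)
  set s := √(Fintype.card α : ℝ)
  rw [← hα] at hsq ⊢
  have hs : 0 ≤ Fintype.card β * s := by positivity
  by_contra! hlt
  have hgap : Fintype.card β * s < E.card - s ^ 2 := by linarith
  have hlarge : Fintype.card β * s < E.card := by linarith [sq_nonneg s]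
  have hprod : (Fintype.card β * s) * (Fintype.card β * s) < (E.card - s ^ 2) * E.card :=
    mul_lt_mul'' hgap hlarge hs hs
  linarith

end RectangleFree

-- Kruskal-style greedy: scan the edges by increasing weight, keeping one only if it is not yet
-- joined by a path of three kept edges.
theorem exists_rectangleFree_spanner {α β R : Type*} [LinearOrder R] (w : α × β → R)
    (s : Finset (α × β)) :
    ∃ E ⊆ s, RectangleFree E ∧ ∀ e ∈ s, ∃ i j, (e.1, j) ∈ E ∧ (i, j) ∈ E ∧ (i, e.2) ∈ E ∧
      w (e.1, j) ≤ w e ∧ w (i, j) ≤ w e ∧ w (i, e.2) ≤ w e := by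
  classical
  induction s using Finset.induction_on_max_value w with
  | empty => exact ⟨∅, subset_rfl, by simp [RectangleFree], by simp⟩
  | insert a s _ hmax ih =>
    obtain ⟨E, hEs, hfree, hspan⟩ := ih
    by_cases hpath : ∃ i j, (a.1, j) ∈ E ∧ (i, j) ∈ E ∧ (i, a.2) ∈ E
    · obtain ⟨i, j, h₁, h₂, h₃⟩ := hpath
      exact ⟨E, hEs.trans (Finset.subset_insert _ _), hfree, Finset.forall_mem_insert _ _ _ |>.2
        ⟨⟨i, j, h₁, h₂, h₃, hmax _ (hEs h₁), hmax _ (hEs h₂), hmax _ (hEs h₃)⟩, hspan⟩⟩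
    · push Not at hpath
      refine ⟨insert a E, Finset.insert_subset_insert _ hEs, hfree.insert hpath,
        Finset.forall_mem_insert _ _ _ |>.2 ⟨⟨a.1, a.2, by simp⟩, fun e he ↦ ?_⟩⟩
      obtain ⟨i, j, h₁, h₂, h₃, hw⟩ := hspan e he
      exact ⟨i, j, Finset.mem_insert_of_mem h₁, Finset.mem_insert_of_mem h₂,
        Finset.mem_insert_of_mem h₃, hw⟩

section Routable

variable {V F : Type*} [AddCommGroup V] [Module ℝ V]

/-- `Routable P D x c` says that `x` is a linear combination `∑ d ∈ D, a d • d` of the dictionary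
`D` of cost `∑ d ∈ D, |a d| * ‖P d‖` at most `c`; here `P` sends a coefficient vector to the
combination of the given points that it encodes. -/
def Routable [SeminormedAddCommGroup F] [NormedSpace ℝ F] (P : V →ₗ[ℝ] F) (D : Finset V) (x : V)
    (c : ℝ) : Prop :=
  ∃ a : V → ℝ, x = ∑ d ∈ D, a d • d ∧ ∑ d ∈ D, |a d| * ‖P d‖ ≤ c

namespace Routable

section Seminormed

variable [SeminormedAddCommGroup F] [NormedSpace ℝ F] {P : V →ₗ[ℝ] F} {D D' : Finset V}
  {x y : V} {c c' : ℝ}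

lemma mono (h : Routable P D x c) (hD : D ⊆ D') (hc : c ≤ c') : Routable P D' x c' := by
  classical
  obtain ⟨a, ha, hac⟩ := h
  refine ⟨fun d ↦ if d ∈ D then a d else 0, ?_, ?_⟩
  · simpa [ite_smul, Finset.inter_eq_right.2 hD] using ha
  · simpa [apply_ite, ite_mul, Finset.inter_eq_right.2 hD] using hac.trans hc

lemma add (hx : Routable P D x c) (hy : Routable P D y c') : Routable P D (x + y) (c + c') := by
  obtain ⟨a, rfl, hac⟩ := hx
  obtain ⟨b, rfl, hbc⟩ := hy
  refine ⟨a + b, by simp only [Pi.add_apply, add_smul, Finset.sum_add_distrib], ?_⟩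
  calc ∑ d ∈ D, |a d + b d| * ‖P d‖ ≤ ∑ d ∈ D, (|a d| * ‖P d‖ + |b d| * ‖P d‖) := by
        gcongr with d
        rw [← add_mul]
        gcongr
        exact abs_add_le _ _
    _ ≤ c + c' := by
        rw [Finset.sum_add_distrib]
        exact add_le_add hac hbc

lemma smul (h : Routable P D x c) (r : ℝ) : Routable P D (r • x) (|r| * c) := by
  obtain ⟨a, rfl, hac⟩ := h
  refine ⟨r • a, by simp only [Pi.smul_apply, smul_assoc, Finset.smul_sum], ?_⟩
  simp only [Pi.smul_apply, smul_eq_mul, abs_mul, mul_assoc, ← Finset.mul_sum]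
  gcongr

lemma neg (h : Routable P D x c) : Routable P D (-x) c := by
  simpa using h.smul (-1)

lemma of_mem (h : x ∈ D) : Routable P D x ‖P x‖ := by
  classical
  exact ⟨fun d ↦ if d = x then 1 else 0, by simp [ite_smul, h], by simp [apply_ite, ite_mul, h]⟩

end Seminormed

variable [NormedAddCommGroup F] [InnerProductSpace ℝ F] {P : V →ₗ[ℝ] F} {D : Finset V}

-- Cauchy–Schwarz: `√A * p + √B * q ≤ √(A + B) * √(p ^ 2 + q ^ 2)`.
lemma add_of_orthogonal {x y : V} {A B : ℝ} (hA : 0 ≤ A) (hB : 0 ≤ B)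
    (hx : Routable P D x (√A * ‖P x‖)) (hy : Routable P D y (√B * ‖P y‖))
    (horth : inner ℝ (P x) (P y) = 0) : Routable P D (x + y) (√(A + B) * ‖P (x + y)‖) := by
  refine (hx.add hy).mono subset_rfl (le_of_sq_le_sq ?_ (by positivity))
  have hpyth : ‖P (x + y)‖ ^ 2 = ‖P x‖ ^ 2 + ‖P y‖ ^ 2 := by
    simpa only [map_add, sq] using norm_add_sq_eq_norm_sq_add_norm_sq_real horth
  rw [mul_pow, hpyth, Real.sq_sqrt (add_nonneg hA hB)]
  nlinarith [sq_nonneg (√A * ‖P y‖ - √B * ‖P x‖), Real.sq_sqrt hA, Real.sq_sqrt hB]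

end Routable

end Routable

section InnerProductSpace

variable {F : Type*} [NormedAddCommGroup F] [InnerProductSpace ℝ F]

lemma norm_smul_sub_smul_sq_of_norm_eq_one {u v : F} (hu : ‖u‖ = 1) (hv : ‖v‖ = 1) (a b : ℝ) :
    ‖a • u - b • v‖ ^ 2 = (a - b) ^ 2 + a * b * ‖u - v‖ ^ 2 := by
  simp only [norm_sub_sq_real, norm_smul, hu, hv, real_inner_smul_left, real_inner_smul_right,
    Real.norm_eq_abs, mul_one, sq_abs]
  ring

lemma abs_sub_le_norm_smul_sub_smul {u v : F} (hu : ‖u‖ = 1) (hv : ‖v‖ = 1) {a b : ℝ}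
    (hab : 0 ≤ a * b) : |a - b| ≤ ‖a • u - b • v‖ := by
  refine abs_le_of_sq_le_sq ?_ (norm_nonneg _)
  rw [norm_smul_sub_smul_sq_of_norm_eq_one hu hv]
  exact le_add_of_nonneg_right (by positivity)

lemma abs_mul_norm_sub_le_norm_smul_sub_smul {u v : F} (hu : ‖u‖ = 1) (hv : ‖v‖ = 1) {a b : ℝ}
    (hab : 0 ≤ a * b) (hle : |b| ≤ |a|) : |b| * ‖u - v‖ ≤ ‖a • u - b • v‖ := by
  have hb : b ^ 2 ≤ a * b := by
    rw [← abs_of_nonneg hab, abs_mul, ← sq_abs, sq]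
    gcongr
  refine le_of_sq_le_sq ?_ (norm_nonneg _)
  rw [norm_smul_sub_smul_sq_of_norm_eq_one hu hv, mul_pow, sq_abs]
  exact le_add_of_nonneg_of_le (sq_nonneg _) (by gcongr)

variable {V : Type*} [AddCommGroup V] [Module ℝ V] {P : V →ₗ[ℝ] F}

lemma exists_normalized_residual (P : V →ₗ[ℝ] F) (W : Submodule ℝ V)
    [(W.map P).HasOrthogonalProjection] (e : V) :
    ∃ (u : V) (s : ℝ), e - s • u ∈ W ∧ u ∈ W ⊔ Submodule.span ℝ {e} ∧
      (P u = 0 ∨ ‖P u‖ = 1) ∧ ∀ z ∈ W, inner ℝ (P z) (P u) = 0 := by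
  obtain ⟨c, hcW, hc⟩ := (W.map P).starProjection_apply_mem (P e)
  have hspan : e - c ∈ W ⊔ Submodule.span ℝ {e} :=
    sub_mem (Submodule.mem_sup_right (Submodule.mem_span_singleton_self e))
      (Submodule.mem_sup_left hcW)
  have horth : ∀ z ∈ W, inner ℝ (P z) (P (e - c)) = 0 := by
    intro z hz
    rw [map_sub, hc, real_inner_comm]
    exact Submodule.starProjection_inner_eq_zero _ _ ⟨z, hz, rfl⟩
  by_cases h0 : P (e - c) = 0
  · exact ⟨e - c, 1, by simpa using hcW, hspan, Or.inl h0, horth⟩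
  · refine ⟨‖P (e - c)‖⁻¹ • (e - c), ‖P (e - c)‖, ?_, Submodule.smul_mem _ _ hspan, Or.inr ?_,
      fun z hz ↦ ?_⟩
    · rwa [smul_inv_smul₀ (norm_ne_zero_iff.2 h0), sub_sub_cancel]
    · rw [map_smul, norm_smul, norm_inv, norm_norm, inv_mul_cancel₀ (norm_ne_zero_iff.2 h0)]
    · rw [map_smul, inner_smul_right, horth z hz, mul_zero]

theorem exists_gramSchmidt_dictionary (P : V →ₗ[ℝ] F) (S : Finset V) :
    ∃ B : Finset V, B.card ≤ S.card ∧ (∀ d ∈ B, d ∈ Submodule.span ℝ (S : Set V)) ∧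
      ∀ z ∈ Submodule.span ℝ (S : Set V), Routable P B z (√S.card * ‖P z‖) := by
  classical
  induction S using Finset.induction_on with
  | empty =>
    refine ⟨∅, le_rfl, by simp, fun z hz ↦ ⟨0, ?_, by simp⟩⟩
    simpa using hz
  | insert e S he ih =>
    obtain ⟨B, hcard, hspan, hroute⟩ := ih
    obtain ⟨u, s, hres, hu, -, horth⟩ := exists_normalized_residual P (Submodule.span ℝ ↑S) e
    have hsup : Submodule.span ℝ ((insert e S : Finset V) : Set V) =
        Submodule.span ℝ ↑S ⊔ Submodule.span ℝ {e} := by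
      rw [Finset.coe_insert, Submodule.span_insert, sup_comm]
    refine ⟨insert u B, ?_, ?_, fun z hz ↦ ?_⟩
    · rw [Finset.card_insert_of_notMem he]
      exact (Finset.card_insert_le _ _).trans (by gcongr)
    · rw [hsup]
      exact Finset.forall_mem_insert _ _ _ |>.2
        ⟨hu, fun d hd ↦ Submodule.mem_sup_left (hspan d hd)⟩
    · rw [Finset.coe_insert, Submodule.mem_span_insert] at hz
      obtain ⟨a, z', hz', rfl⟩ := hz
      have hy : z' + a • (e - s • u) ∈ Submodule.span ℝ (S : Set V) :=
        add_mem hz' (Submodule.smul_mem _ _ hres)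
      have hdecomp : a • e + z' = (z' + a • (e - s • u)) + (a * s) • u := by module
      have hru : Routable P (insert u B) ((a * s) • u) (√1 * ‖P ((a * s) • u)‖) := by
        simpa [norm_smul, mul_assoc] using
          (Routable.of_mem (P := P) (Finset.mem_insert_self u B)).smul (a * s)
      rw [hdecomp, Finset.card_insert_of_notMem he, Nat.cast_add_one]
      refine ((hroute _ hy).mono (Finset.subset_insert u B) le_rfl).add_of_orthogonal
        (Nat.cast_nonneg _) zero_le_one hru ?_
      rw [map_smul, inner_smul_right, horth _ hy, mul_zero]

lemma Routable.smul_sub_smul {D : Finset V} {u v : V} (hu : ‖P u‖ = 1) (hv : ‖P v‖ = 1)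
    (ru : Routable P D u ‖P u‖) (rsub : Routable P D (u - v) (3 * ‖P (u - v)‖)) {a b : ℝ}
    (hab : 0 ≤ a * b) (hle : |b| ≤ |a|) :
    Routable P D (a • u - b • v) (4 * ‖P (a • u - b • v)‖) := by
  have hdecomp : a • u - b • v = (a - b) • u + b • (u - v) := by module
  have h₁ := abs_sub_le_norm_smul_sub_smul hu hv hab
  have h₂ := abs_mul_norm_sub_le_norm_smul_sub_smul hu hv hab hle
  rw [← map_smul, ← map_smul, ← map_sub] at h₁ h₂
  rw [← map_sub] at h₂
  have r := (ru.smul (a - b)).add (rsub.smul b)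
  rw [← hdecomp] at r
  refine r.mono subset_rfl ?_
  rw [hu]
  linarith

lemma Routable.smul_add_smul {D : Finset V} {u v : V} (hu : P u = 0 ∨ ‖P u‖ = 1)
    (hv : P v = 0 ∨ ‖P v‖ = 1) (ru : Routable P D u ‖P u‖) (rv : Routable P D v ‖P v‖)
    (rsub : Routable P D (u - v) (3 * ‖P (u - v)‖))
    (radd : Routable P D (u + v) (3 * ‖P (u + v)‖)) (a b : ℝ) :
    Routable P D (a • u + b • v) (4 * ‖P (a • u + b • v)‖) := by
  wlog hle : |b| ≤ |a| generalizing u v a b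
  · rw [add_comm (a • u)]
    refine this hv hu rv ru ?_ (by rwa [add_comm]) b a (le_of_not_ge hle)
    simpa [norm_sub_rev] using rsub.neg
  have rtriangle := (ru.smul a).add (rv.smul b)
  rcases hu with hu | hu
  · refine rtriangle.mono subset_rfl ?_
    simp only [map_add, map_smul, hu, norm_zero, smul_zero, zero_add, mul_zero, norm_smul,
      Real.norm_eq_abs]
    exact le_mul_of_one_le_left (by positivity) (by norm_num)
  rcases hv with hv | hv
  · refine rtriangle.mono subset_rfl ?_
    simp only [map_add, map_smul, hv, norm_zero, smul_zero, add_zero, mul_zero, norm_smul,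
      Real.norm_eq_abs]
    exact le_mul_of_one_le_left (by positivity) (by norm_num)
  rcases le_total 0 (a * b) with hab | hab
  · have r := ru.smul_sub_smul (v := -v) hu (by simpa using hv) (by simpa using radd) hab hle
    rwa [smul_neg, sub_neg_eq_add] at r
  · have r := ru.smul_sub_smul hu hv rsub (a := a) (b := -b) (by linarith) (by simpa using hle)
    rwa [neg_smul, sub_neg_eq_add] at r

theorem exists_difference_dictionary {α β : Type*} [Fintype α] [Fintype β] (P : V →ₗ[ℝ] F)
    (u : α → V) (v : β → V) :
    ∃ G : Finset V, (G.card : ℝ) ≤ Fintype.card α + Fintype.card β * √(Fintype.card α) ∧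
      (∀ d ∈ G, ∃ i j, d = u i - v j) ∧
      ∀ i j, Routable P G (u i - v j) (3 * ‖P (u i - v j)‖) := by
  classical
  let diff : α × β → V := fun e ↦ u e.1 - v e.2
  obtain ⟨E, -, hfree, hspan⟩ := exists_rectangleFree_spanner (fun e ↦ ‖P (diff e)‖) Finset.univ
  refine ⟨E.image diff, ?_, fun d hd ↦ ?_, fun i j ↦ ?_⟩
  · exact (Nat.cast_le.2 Finset.card_image_le).trans hfree.card_le
  · obtain ⟨e, -, rfl⟩ := Finset.mem_image.1 hd
    exact ⟨e.1, e.2, rfl⟩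
  · obtain ⟨k, l, h₁, h₂, h₃, w₁, w₂, w₃⟩ := hspan (i, j) (Finset.mem_univ _)
    have route : ∀ {e}, e ∈ E → Routable P (E.image diff) (diff e) ‖P (diff e)‖ :=
      fun he ↦ Routable.of_mem (Finset.mem_image_of_mem diff he)
    have hpath : u i - v j = diff (i, l) + -diff (k, l) + diff (k, j) := by
      simp only [diff]
      abel
    rw [hpath]
    refine (((route h₁).add (route h₂).neg).add (route h₃)).mono subset_rfl ?_
    rw [← hpath]
    linarith

theorem exists_pair_dictionary {ι : Type*} [Fintype ι] {u : ι → V}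
    (hu : ∀ i, P (u i) = 0 ∨ ‖P (u i)‖ = 1) :
    ∃ G : Finset V, (G.card : ℝ) ≤ 2 * Fintype.card ι + 2 * (Fintype.card ι * √(Fintype.card ι)) ∧
      (∀ d ∈ G, ∃ i j, d ∈ Submodule.span ℝ {u i, u j}) ∧
      ∀ i j (a b : ℝ), Routable P G (a • u i + b • u j) (4 * ‖P (a • u i + b • u j)‖) := by
  classical
  obtain ⟨G, hcard, hmem, hroute⟩ := exists_difference_dictionary P u (Sum.elim u (-u))
  have rself : ∀ i, Routable P (Finset.univ.image u ∪ G) (u i) ‖P (u i)‖ := fun i ↦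
    Routable.of_mem (Finset.mem_union_left _ (Finset.mem_image_of_mem u (Finset.mem_univ i)))
  have rdiff := fun i j ↦
    (hroute i j).mono (Finset.subset_union_right (s₁ := Finset.univ.image u)) le_rfl
  refine ⟨Finset.univ.image u ∪ G, ?_, fun d hd ↦ ?_, fun i j ↦ ?_⟩
  · have himage : (Finset.univ.image u).card ≤ Fintype.card ι := Finset.card_image_le
    have hunion : ((Finset.univ.image u ∪ G).card : ℝ) ≤ Fintype.card ι + G.card := by
      exact_mod_cast (Finset.card_union_le _ _).trans (by gcongr)
    rw [Fintype.card_sum, Nat.cast_add] at hcard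
    linarith
  · simp only [Submodule.mem_span_pair]
    rcases Finset.mem_union.1 hd with hd | hd
    · obtain ⟨i, -, rfl⟩ := Finset.mem_image.1 hd
      exact ⟨i, i, 1, 0, by simp⟩
    · obtain ⟨i, j | j, rfl⟩ := hmem d hd
      · exact ⟨i, j, 1, -1, by simp [sub_eq_add_neg]⟩
      · exact ⟨i, j, 1, 1, by simp⟩
  · exact (rself i).smul_add_smul (hu i) (hu j) (rself j) (rdiff i (.inl j))
      (by simpa using rdiff i (.inr j))

lemma span_pair_le_span_insert_insert {R M : Type*} [Semiring R] [AddCommMonoid M] [Module R M]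
    {S : Set M} {u v e e' : M} (hu : u ∈ Submodule.span R S ⊔ Submodule.span R {e})
    (hv : v ∈ Submodule.span R S ⊔ Submodule.span R {e'}) :
    Submodule.span R {u, v} ≤ Submodule.span R (insert e (insert e' S)) := by
  rw [← Submodule.span_union] at hu hv
  refine Submodule.span_le.2 (Set.pair_subset ?_ ?_)
  · exact Submodule.span_mono (by grind) hu
  · exact Submodule.span_mono (by grind) hv

theorem exists_span_add_pair_dictionary {ι : Type*} [Fintype ι] [Nonempty ι] (P : V →ₗ[ℝ] F)
    (e : ι → V) (S : Finset V) :
    ∃ D : Finset V,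
      (D.card : ℝ) ≤ S.card + 2 * Fintype.card ι + 2 * (Fintype.card ι * √(Fintype.card ι)) ∧
      (∀ d ∈ D, ∃ i j, d ∈ Submodule.span ℝ (insert (e i) (insert (e j) (S : Set V)))) ∧
      ∀ i j, ∀ x ∈ Submodule.span ℝ (insert (e i) (insert (e j) (S : Set V))),
        Routable P D x (√(S.card + 16) * ‖P x‖) := by
  classical
  obtain ⟨B, hBcard, hBspan, hBroute⟩ := exists_gramSchmidt_dictionary P S
  choose u s hres hu hunit horth using exists_normalized_residual P (Submodule.span ℝ (S : Set V))
  obtain ⟨G, hGcard, hGspan, hGroute⟩ := exists_pair_dictionary fun i ↦ hunit (e i)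
  refine ⟨B ∪ G, ?_, fun d hd ↦ ?_, fun i j x hx ↦ ?_⟩
  · have hunion : ((B ∪ G).card : ℝ) ≤ S.card + G.card := by
      exact_mod_cast (Finset.card_union_le _ _).trans (by gcongr)
    linarith
  · rcases Finset.mem_union.1 hd with hd | hd
    · obtain ⟨i⟩ := ‹Nonempty ι›
      exact ⟨i, i, Submodule.span_mono (by grind) (hBspan d hd)⟩
    · obtain ⟨i, j, hd⟩ := hGspan d hd
      exact ⟨i, j, span_pair_le_span_insert_insert (hu (e i)) (hu (e j)) hd⟩
  · simp only [Submodule.mem_span_insert] at hx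
    obtain ⟨a, _, ⟨b, z, hz, rfl⟩, rfl⟩ := hx
    set y := z + a • (e i - s (e i) • u (e i)) + b • (e j - s (e j) • u (e j)) with hy_def
    set w := (a * s (e i)) • u (e i) + (b * s (e j)) • u (e j) with hw_def
    have hy : y ∈ Submodule.span ℝ (S : Set V) :=
      add_mem (add_mem hz (Submodule.smul_mem _ _ (hres _))) (Submodule.smul_mem _ _ (hres _))
    have hdecomp : a • e i + (b • e j + z) = y + w := by
      rw [hy_def, hw_def]
      module
    have route_w : Routable P (B ∪ G) w (√16 * ‖P w‖) := by
      rw [show √(16 : ℝ) = 4 by rw [Real.sqrt_eq_iff_mul_self_eq] <;> norm_num]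
      exact (hGroute i j _ _).mono Finset.subset_union_right le_rfl
    rw [hdecomp]
    refine ((hBroute y hy).mono Finset.subset_union_left le_rfl).add_of_orthogonal
      (Nat.cast_nonneg _) (by norm_num) route_w ?_
    simp only [hw_def, map_add, map_smul, inner_add_right, inner_smul_right, horth _ y hy,
      mul_zero, add_zero]

end InnerProductSpace

lemma exists_fin_subset_range {ι : Type*} [Nonempty ι] {T : Finset ι} {t : ℕ} (hT : T.card ≤ t) :
    ∃ g : Fin t → ι, (T : Set ι) ⊆ Set.range g := by
  obtain ⟨φ⟩ : Nonempty (T ↪ Fin t) :=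
    Function.Embedding.nonempty_of_card_le (by simpa using hT)
  refine ⟨Function.extend φ (↑) fun _ ↦ Classical.arbitrary ι, fun i hi ↦ ⟨φ ⟨i, hi⟩, ?_⟩⟩
  exact φ.injective.extend_apply _ _ _

lemma exists_fin_subset_insert_insert_range {ι : Type*} [Nonempty ι] {T : Finset ι} {r : ℕ}
    (hT : T.card ≤ r + 2) :
    ∃ (i j : ι) (f : Fin r → ι), (T : Set ι) ⊆ insert i (insert j (Set.range f)) := by
  obtain ⟨g, hg⟩ := exists_fin_subset_range hT
  refine ⟨g 0, Fin.tail g 0, Fin.tail (Fin.tail g), ?_⟩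
  rwa [← Fin.range_cons, ← Fin.range_cons, Fin.cons_self_tail, Fin.cons_self_tail]

theorem exists_spanning_dictionary {V F ι : Type*} [AddCommGroup V] [Module ℝ V]
    [NormedAddCommGroup F] [InnerProductSpace ℝ F] [Fintype ι] [Nonempty ι] (P : V →ₗ[ℝ] F)
    (e : ι → V) (r : ℕ) :
    ∃ D : Finset V,
      (D.card : ℝ) ≤ Fintype.card ι ^ r * (5 * (Fintype.card ι * √(Fintype.card ι))) ∧
      (∀ d ∈ D, ∃ T : Finset ι, T.card ≤ r + 2 ∧ d ∈ Submodule.span ℝ (e '' T)) ∧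
      ∀ T : Finset ι, T.card ≤ r + 2 → ∀ x ∈ Submodule.span ℝ (e '' T),
        Routable P D x (√(r + 16) * ‖P x‖) := by
  classical
  choose Dic hcard hspan hroute using exists_span_add_pair_dictionary P e
  let S : (Fin r → ι) → Finset V := fun f ↦ (Finset.univ.image f).image e
  have hSr : ∀ f, (S f).card ≤ r := fun f ↦
    Finset.card_image_le.trans (Finset.card_image_le.trans (by simp))
  have hSn : ∀ f, (S f).card ≤ Fintype.card ι := fun f ↦
    Finset.card_image_le.trans (Finset.card_le_univ _)
  refine ⟨Finset.univ.biUnion fun f ↦ Dic (S f), ?_, fun d hd ↦ ?_, fun T hT x hx ↦ ?_⟩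
  · have hDic : ∀ f, ((Dic (S f)).card : ℝ) ≤ 5 * (Fintype.card ι * √(Fintype.card ι)) := by
      intro f
      have hSn' : ((S f).card : ℝ) ≤ Fintype.card ι := by exact_mod_cast hSn f
      have hsqrt : (Fintype.card ι : ℝ) ≤ Fintype.card ι * √(Fintype.card ι) :=
        le_mul_of_one_le_right (by positivity)
          (Real.one_le_sqrt.2 (by exact_mod_cast Fintype.card_pos))
      linarith [hcard (S f)]
    calc ((Finset.univ.biUnion fun f ↦ Dic (S f)).card : ℝ)
        ≤ ∑ f : Fin r → ι, ((Dic (S f)).card : ℝ) := by exact_mod_cast Finset.card_biUnion_le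
      _ ≤ ∑ _f : Fin r → ι, 5 * (Fintype.card ι * √(Fintype.card ι)) :=
          Finset.sum_le_sum fun f _ ↦ hDic f
      _ = _ := by simp
  · obtain ⟨f, -, hd⟩ := Finset.mem_biUnion.1 hd
    obtain ⟨i, j, hd⟩ := hspan (S f) d hd
    refine ⟨insert i (insert j (Finset.univ.image f)), ?_, ?_⟩
    · have himage : (Finset.univ.image f).card ≤ r := Finset.card_image_le.trans (by simp)
      grw [Finset.card_insert_le, Finset.card_insert_le, himage]
    · simpa [S, Set.image_insert_eq] using hd
  · obtain ⟨i, j, f, hf⟩ := exists_fin_subset_insert_insert_range hT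
    have hxS : x ∈ Submodule.span ℝ (insert (e i) (insert (e j) (S f : Set V))) := by
      refine Submodule.span_mono ?_ hx
      simpa [S, Set.image_insert_eq] using Set.image_mono (f := e) hf
    refine (hroute (S f) _ _ x hxS).mono
      (Finset.subset_biUnion_of_mem (fun f ↦ Dic (S f)) (Finset.mem_univ f)) ?_
    gcongr
    exact hSr f

lemma mem_span_single_image_iff {ι : Type*} [Finite ι] [DecidableEq ι] {x : ι → ℝ} {T : Set ι} :
    x ∈ Submodule.span ℝ ((fun i ↦ Pi.single i (1 : ℝ)) '' T) ↔ Function.support x ⊆ T := by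
  cases nonempty_fintype ι
  have h := (Pi.basisFun ℝ ι).mem_span_image (m := x) (s := T)
  simpa [Set.subset_def, Pi.basisFun_apply] using h

theorem stmt18_general {ι F : Type*} [Fintype ι] [Nonempty ι] [NormedAddCommGroup F]
    [InnerProductSpace ℝ F] (p : ι → F) {t : ℕ} (ht : 2 ≤ t) :
    ∃ D : Finset (ι → ℝ), (D.card : ℝ) ≤ 5 * (Fintype.card ι : ℝ) ^ ((t : ℝ) - 1 / 2) ∧
      (∀ d ∈ D, (Function.support d).ncard ≤ t) ∧
      ∀ x : ι → ℝ, (Function.support x).ncard ≤ t →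
        ∃ a : (ι → ℝ) → ℝ, x = ∑ d ∈ D, a d • d ∧
          ∑ d ∈ D, |a d| * ‖∑ i, d i • p i‖ ≤ 3 * √t * ‖∑ i, x i • p i‖ := by
  classical
  obtain ⟨r, rfl⟩ := Nat.exists_eq_add_of_le' ht
  obtain ⟨D, hcard, hspan, hroute⟩ :=
    exists_spanning_dictionary (Fintype.linearCombination ℝ p) (fun i ↦ Pi.single i (1 : ℝ)) r
  refine ⟨D, hcard.trans_eq ?_, fun d hd ↦ ?_, fun x hx ↦ ?_⟩
  · have hpos : (0 : ℝ) < Fintype.card ι := by exact_mod_cast Fintype.card_pos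
    rw [show ((r + 2 : ℕ) : ℝ) - 1 / 2 = r + (1 + 1 / 2) by push_cast; ring, Real.rpow_add hpos,
      Real.rpow_add hpos, Real.rpow_natCast, Real.rpow_one, ← Real.sqrt_eq_rpow]
    ring
  · obtain ⟨T, hT, hd⟩ := hspan d hd
    rw [mem_span_single_image_iff] at hd
    exact (Set.ncard_le_ncard hd T.finite_toSet).trans (by rwa [Set.ncard_coe_finset])
  · have hcost : √((r : ℝ) + 16) ≤ 3 * √((r + 2 : ℕ) : ℝ) := by
      rw [Real.sqrt_le_left (by positivity), mul_pow, Real.sq_sqrt (by positivity)]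
      push_cast
      linarith [Nat.cast_nonneg (α := ℝ) r]
    have hroute_x := hroute (Set.toFinite (Function.support x)).toFinset
      (by rwa [← Set.ncard_eq_toFinset_card]) x (mem_span_single_image_iff.2 (by simp))
    exact hroute_x.mono subset_rfl (by rw [Fintype.linearCombination_apply]; gcongr)

lemma l2norm_eq_norm_toLp {k : ℕ} (v : Fin k → ℝ) : l2norm v = ‖WithLp.toLp 2 v‖ := by
  simp [l2norm, EuclideanSpace.norm_eq]

lemma three_mul_sqrt_le_rpow_mul_log {n t : ℕ} (hn : 2 ≤ n) (ht : 1 ≤ t) :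
    3 * √t ≤ 6 * (t : ℝ) ^ ((3 : ℝ) / 2) * Real.log n := by
  have hlog : 1 / 2 ≤ Real.log n :=
    calc (1 / 2 : ℝ) ≤ Real.log 2 := by linarith [Real.log_two_gt_d9]
      _ ≤ Real.log n := Real.log_le_log (by norm_num) (by exact_mod_cast hn)
  have hpow : √t ≤ (t : ℝ) ^ ((3 : ℝ) / 2) := by
    rw [Real.sqrt_eq_rpow]
    exact Real.rpow_le_rpow_of_exponent_le (by exact_mod_cast ht) (by norm_num)
  calc 3 * √t = 6 * √t * (1 / 2) := by ring
    _ ≤ 6 * (t : ℝ) ^ ((3 : ℝ) / 2) * Real.log n := by gcongr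

/-- every collection of unit vectors p₁,…,pₙ admits a dictionary of
O(n^{t-1/2}) t-sparse coefficient vectors through which every t-sparse combination can be
routed with ℓ1 cost O(t^{3/2} log n). -/
theorem stmt18 : ∃ C : ℝ, 0 < C ∧ ∀ (n m t : ℕ), 2 ≤ n → 2 ≤ t →
    ∀ p : Fin n → Fin m → ℝ, (∀ i, l2norm (p i) = 1) →
      ∃ D : Finset (Fin n → ℝ), (D.card : ℝ) ≤ C * (n : ℝ) ^ ((t : ℝ) - 1 / 2) ∧
        (∀ d ∈ D, SparseVec t d) ∧
        ∀ x : Fin n → ℝ, SparseVec t x →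
          ∃ a : (Fin n → ℝ) → ℝ, x = ∑ d ∈ D, a d • d ∧
            ∑ d ∈ D, |a d| * l2norm (∑ i, d i • p i) ≤
              C * (t : ℝ) ^ ((3 : ℝ) / 2) * Real.log n * l2norm (∑ i, x i • p i) := by
  refine ⟨6, by norm_num, fun n m t hn ht p _ ↦ ?_⟩
  have : Nonempty (Fin n) := ⟨⟨0, by omega⟩⟩
  obtain ⟨D, hcard, hsparse, hroute⟩ := stmt18_general (fun i ↦ WithLp.toLp 2 (p i)) ht
  refine ⟨D, hcard.trans (by rw [Fintype.card_fin]; gcongr; norm_num), hsparse, fun x hx ↦ ?_⟩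
  obtain ⟨a, hxa, hcost⟩ := hroute x hx
  refine ⟨a, hxa, ?_⟩
  simp only [l2norm_eq_norm_toLp, WithLp.toLp_sum, WithLp.toLp_smul]
  exact hcost.trans
    (mul_le_mul_of_nonneg_right (three_mul_sqrt_le_rpow_mul_log hn (one_le_two.trans ht))
      (norm_nonneg _))
end
end
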